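/- For every integer n ≥ 1, one has (1 − 1/(2n))·E_n^* ≤ E_n ≤ E_n^*. -/

import Mathlib

/-- Principal branch of the Lambert W function on `[0, ∞)`: for `x ≥ 0`,
`lambertW x` is the unique `y ≥ 0` with `y * exp y = x`. -/
noncomputable def lambertW (x : ℝ) : ℝ := Function.invFun (fun y : ℝ => y * Real.exp y) x

/-- `E n = n! * exp(e^R - 1) / (R^n * sqrt(2π(n+1)(R+1)))` with `R = W(n+1)`. -/
noncomputable def E (n : ℕ) : ℝ :=
  (Nat.factorial n : ℝ) * Real.exp (Real.exp (lambertW (n + 1)) - 1) /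
    ((lambertW (n + 1)) ^ n * Real.sqrt (2 * Real.pi * (n + 1) * (lambertW (n + 1) + 1)))

/-- `E* n = exp(e^{W(n)} + n W(n) - (n+1)) / sqrt(1 + W(n))`. -/
noncomputable def Estar (n : ℕ) : ℝ :=
  Real.exp (Real.exp (lambertW n) + n * lambertW n - (n + 1)) / Real.sqrt (1 + lambertW n)

/-!
The function `Φ x = exp (W x) + x * W x - x` is a primitive of `W`, and in terms of it
`E* n = exp (Φ n - 1) / √(1 + W n)`, while `R ^ n = (n + 1) ^ n * exp (-n * R)` turns `E n` into
`(s / √π) * exp (Φ (n + 1) - W (n + 1) - 1) / √(1 + W (n + 1))`, where `s` is the `(n + 1)`-st term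
of Stirling's sequence. Taylor's formula for `Φ` at `n + 1` gives
`Φ (n + 1) - Φ n - W (n + 1) = -W' ξ / 2` for some `ξ ∈ (n, n + 1)`, and `W'` is decreasing.

For the upper bound, the loss `W' (n + 1) / 2` beats Stirling's gain `1 / (12 * (n + 1))`. For the
lower bound, the quotient of the square roots costs at most `W' n / (2 * (1 + W n))`, so that the
total loss is at most `(1 - 1 / (1 + W n) ^ 2) / (2 * n)`.
-/

open Real Set Filter Topology

section Calculus

theorem exists_taylor_two_eq_of_hasDerivAt {f f' f'' : ℝ → ℝ} {a b : ℝ} (hab : a < b)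
    (hf : ∀ x ∈ Icc a b, HasDerivAt f (f' x) x) (hf' : ∀ x ∈ Icc a b, HasDerivAt f' (f'' x) x) :
    ∃ c ∈ Ioo a b, f a = f b + f' b * (a - b) + f'' c / 2 * (a - b) ^ 2 := by
  let remainder : ℝ → ℝ := fun t ↦ f a - (f t + f' t * (a - t))
  have hasDerivAt_remainder : ∀ t ∈ Icc a b, HasDerivAt remainder (-(f'' t * (a - t))) t := by
    intro t ht
    refine ((hf t ht).add ((hf' t ht).mul ((hasDerivAt_id' t).const_sub a))).const_sub (f a)
      |>.congr_deriv ?_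
    ring
  have hasDerivAt_sq : ∀ t, HasDerivAt (fun t ↦ (a - t) ^ 2) (-(2 * (a - t))) t := fun t ↦
    (((hasDerivAt_id' t).const_sub a).pow 2).congr_deriv (by ring)
  obtain ⟨c, hc, hratio⟩ := exists_ratio_hasDerivAt_eq_ratio_slope remainder _ hab
    (fun t ht ↦ (hasDerivAt_remainder t ht).continuousAt.continuousWithinAt)
    (fun t ht ↦ hasDerivAt_remainder t (Ioo_subset_Icc_self ht)) _ _
    (fun t _ ↦ (hasDerivAt_sq t).continuousAt.continuousWithinAt) (fun t _ ↦ hasDerivAt_sq t)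
  refine ⟨c, hc, mul_right_cancel₀ (sub_ne_zero.2 hc.1.ne) ?_⟩
  simp only [remainder] at hratio
  linear_combination hratio / 2

theorem log_sub_log_le_div {x y : ℝ} (hx : 0 < x) (hy : 0 < y) :
    log y - log x ≤ (y - x) / x := by
  rw [← log_div hy.ne' hx.ne', sub_div, div_self hx.ne']
  exact log_le_sub_one_of_pos (div_pos hy hx)

end Calculus

section Stirling

theorem log_stirlingSeq_succ (n : ℕ) :
    log (Stirling.stirlingSeq (n + 1)) =
      log n.factorial + (log (n + 1) - log 2) / 2 - (n + 1) * (log (n + 1) - 1) := by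
  rw [Stirling.log_stirlingSeq_formula, Nat.factorial_succ]
  push_cast
  rw [log_mul (by positivity) (by positivity), log_mul (by positivity) (by positivity),
    log_div (by positivity) (by positivity), log_exp]
  ring

theorem log_stirlingSeq_le {n : ℕ} (hn : n ≠ 0) :
    log (Stirling.stirlingSeq n) ≤ log √π + 1 / (12 * n) := by
  obtain ⟨k, rfl⟩ := Nat.exists_eq_succ_of_ne_zero hn
  let a : ℕ → ℝ := fun m ↦ log (Stirling.stirlingSeq (m + 1)) - 1 / 12 * (1 / ((m : ℝ) + 1))
  have monotone_a : Monotone a := by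
    refine monotone_nat_of_le_succ fun m ↦ ?_
    have telescope : 1 / (12 * ((m + 1 : ℕ) : ℝ) * ((m + 1 : ℕ) + 1)) =
        1 / 12 * (1 / ((m : ℝ) + 1)) - 1 / 12 * (1 / (((m + 1 : ℕ) : ℝ) + 1)) := by
      push_cast
      field_simp
      ring
    simp only [a]
    linarith [Stirling.log_stirlingSeq_sdiff_le (m + 1)]
  have tendsto_a : Tendsto a atTop (𝓝 (log √π - 1 / 12 * 0)) :=
    ((Stirling.tendsto_stirlingSeq_sqrt_pi.comp (tendsto_add_atTop_nat 1)).log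
      (sqrt_pos.2 pi_pos).ne').sub (tendsto_one_div_add_atTop_nhds_zero_nat.const_mul _)
  have a_le : a k ≤ log √π - 1 / 12 * 0 := monotone_a.ge_of_tendsto tendsto_a k
  simp only [a] at a_le
  rw [Nat.succ_eq_add_one, Nat.cast_succ, ← one_div_mul_one_div]
  linarith

end Stirling

section LambertW

variable {x y : ℝ}

theorem strictMonoOn_mul_exp : StrictMonoOn (fun y : ℝ ↦ y * exp y) (Ici 0) :=
  fun _ ha _ _ hab ↦ mul_lt_mul hab (exp_le_exp.2 hab.le) (exp_pos _) (ha.trans hab.le)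

theorem exists_mul_exp_eq (hx : 0 ≤ x) : ∃ y, y * exp y = x := by
  have mem_Icc : x ∈ Icc (0 * exp 0) (x * exp x) :=
    ⟨by simpa using hx, le_mul_of_one_le_right hx (one_le_exp hx)⟩
  obtain ⟨y, -, hy⟩ := intermediate_value_Icc hx
    (f := fun y ↦ y * exp y) (by fun_prop) mem_Icc
  exact ⟨y, hy⟩

theorem lambertW_mul_exp_lambertW (hx : 0 ≤ x) : lambertW x * exp (lambertW x) = x :=
  Function.invFun_eq (exists_mul_exp_eq hx)

theorem lambertW_nonneg (hx : 0 ≤ x) : 0 ≤ lambertW x :=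
  nonneg_of_mul_nonneg_left ((lambertW_mul_exp_lambertW hx).symm ▸ hx) (exp_pos _)

theorem lambertW_pos (hx : 0 < x) : 0 < lambertW x :=
  pos_of_mul_pos_left ((lambertW_mul_exp_lambertW hx.le).symm ▸ hx) (exp_pos _).le

theorem log_lambertW (hx : 0 < x) : log (lambertW x) = log x - lambertW x := by
  have log_eq := congrArg log (lambertW_mul_exp_lambertW hx.le)
  rw [log_mul (lambertW_pos hx).ne' (exp_pos _).ne', log_exp] at log_eq
  exact eq_sub_of_add_eq log_eq

theorem lambertW_mul_exp (hy : 0 ≤ y) : lambertW (y * exp y) = y :=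
  have nonneg : 0 ≤ y * exp y := by positivity
  strictMonoOn_mul_exp.injOn (lambertW_nonneg nonneg) hy (lambertW_mul_exp_lambertW nonneg)

theorem strictMonoOn_lambertW : StrictMonoOn lambertW (Ici 0) := by
  intro x hx y hy hxy
  rw [← strictMonoOn_mul_exp.lt_iff_lt (lambertW_nonneg hx) (lambertW_nonneg hy)]
  simpa only [lambertW_mul_exp_lambertW hx, lambertW_mul_exp_lambertW hy] using hxy

theorem continuousAt_lambertW (hx : 0 < x) : ContinuousAt lambertW x := by
  refine strictMonoOn_lambertW.continuousAt_of_image_mem_nhds (Ici_mem_nhds hx) ?_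
  refine mem_of_superset (Ici_mem_nhds (lambertW_pos hx)) fun y (hy : 0 ≤ y) ↦ ?_
  exact ⟨y * exp y, mul_nonneg hy (exp_pos y).le, lambertW_mul_exp hy⟩

theorem hasDerivAt_lambertW (hx : 0 < x) :
    HasDerivAt lambertW ((1 + lambertW x) * exp (lambertW x))⁻¹ x := by
  have W_pos := lambertW_pos hx
  have hasDerivAt_mul_exp : HasDerivAt (fun y ↦ y * exp y)
      ((1 + lambertW x) * exp (lambertW x)) (lambertW x) :=
    ((hasDerivAt_id' _).mul (hasDerivAt_exp _)).congr_deriv (by ring)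
  refine hasDerivAt_mul_exp.of_local_left_inverse (continuousAt_lambertW hx) (by positivity) ?_
  filter_upwards [Ioi_mem_nhds hx] with y hy using lambertW_mul_exp_lambertW (le_of_lt hy)

theorem differentiableAt_lambertW (hx : 0 < x) : DifferentiableAt ℝ lambertW x :=
  (hasDerivAt_lambertW hx).differentiableAt

theorem deriv_lambertW (hx : 0 < x) : deriv lambertW x = lambertW x / (1 + lambertW x) / x := by
  have W_pos := lambertW_pos hx
  rw [(hasDerivAt_lambertW hx).deriv]
  field_simp
  linarith [lambertW_mul_exp_lambertW hx.le]

theorem antitoneOn_deriv_lambertW : AntitoneOn (deriv lambertW) (Ioi 0) := by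
  intro x hx y hy hxy
  have W_pos := lambertW_pos hx
  have W_pos' := lambertW_pos hy
  have W_le : lambertW x ≤ lambertW y :=
    strictMonoOn_lambertW.monotoneOn (Ioi_subset_Ici_self hx) (Ioi_subset_Ici_self hy) hxy
  rw [(hasDerivAt_lambertW hx).deriv, (hasDerivAt_lambertW hy).deriv]
  gcongr

theorem lambertW_sub_le_deriv_mul (hx : 0 < x) (hxy : x ≤ y) :
    lambertW y - lambertW x ≤ deriv lambertW x * (y - x) := by
  have pos_of_mem {t : ℝ} (ht : t ∈ Ici x) : 0 < t := hx.trans_le ht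
  refine (convex_Ici x).image_sub_le_mul_sub_of_deriv_le
    (fun t ht ↦ (continuousAt_lambertW (pos_of_mem ht)).continuousWithinAt)
    (fun t ht ↦
      (differentiableAt_lambertW (pos_of_mem (interior_subset ht))).differentiableWithinAt)
    (fun t ht ↦ ?_) x self_mem_Ici y hxy hxy
  exact antitoneOn_deriv_lambertW hx (pos_of_mem (interior_subset ht)) (interior_subset ht)

theorem log_one_add_lambertW_sub_le (hx : 0 < x) (hxy : x ≤ y) :
    log (1 + lambertW y) - log (1 + lambertW x) ≤
      deriv lambertW x * (y - x) / (1 + lambertW x) := by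
  have W_pos := lambertW_pos hx
  have W_pos' := lambertW_pos (hx.trans_le hxy)
  refine (log_sub_log_le_div (by positivity) (by positivity)).trans ?_
  rw [add_sub_add_left_eq_sub]
  gcongr
  exact lambertW_sub_le_deriv_mul hx hxy

theorem deriv_lambertW_mul_one_add_le (hx : 0 < x) :
    deriv lambertW x * (1 + 1 / (1 + lambertW x)) ≤ 1 / x := by
  have W_pos := lambertW_pos hx
  have factor : deriv lambertW x * (1 + 1 / (1 + lambertW x)) =
      (1 - 1 / (1 + lambertW x) ^ 2) / x := by
    rw [deriv_lambertW hx]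
    field_simp
    ring
  rw [factor]
  gcongr
  exact sub_le_self _ (by positivity)

theorem one_third_le_lambertW (hx : 1 ≤ x) : 1 / 3 ≤ lambertW x := by
  have exp_le_three : exp (1 / 3) ≤ 3 :=
    (exp_le_exp.2 (by norm_num)).trans exp_one_lt_three.le
  rw [← lambertW_mul_exp (y := 1 / 3) (by norm_num)]
  exact strictMonoOn_lambertW.monotoneOn (mem_Ici.2 (by positivity))
    (mem_Ici.2 (zero_le_one.trans hx)) (by linarith)

theorem one_div_four_mul_le_deriv_lambertW (hx : 1 ≤ x) : 1 / (4 * x) ≤ deriv lambertW x := by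
  have x_pos := zero_lt_one.trans_le hx
  have W_ge := one_third_le_lambertW hx
  have quarter_le : 1 / 4 ≤ lambertW x / (1 + lambertW x) := by
    rw [div_le_div_iff₀ (by norm_num) (by linarith)]
    linarith
  rw [deriv_lambertW x_pos, ← div_div]
  gcongr

/-- The primitive `exp (W x) + x * W x - x` of the Lambert function `W` on `(0, ∞)`. It is the
part of the exponents of `E` and `Estar` that grows with `n`. -/
noncomputable def lambertWPrimitive (x : ℝ) : ℝ :=
  exp (lambertW x) + x * lambertW x - x

theorem hasDerivAt_lambertWPrimitive (hx : 0 < x) :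
    HasDerivAt lambertWPrimitive (lambertW x) x := by
  have W_pos := lambertW_pos hx
  have hasDerivAt_W := hasDerivAt_lambertW hx
  refine ((hasDerivAt_W.exp.add ((hasDerivAt_id' x).mul hasDerivAt_W)).sub
    (hasDerivAt_id' x)).congr_deriv ?_
  field_simp
  linear_combination -lambertW_mul_exp_lambertW hx.le

theorem exists_lambertWPrimitive_taylor_eq (hx : 0 < x) (hxy : x < y) :
    ∃ ξ ∈ Ioo x y, lambertWPrimitive y - lambertWPrimitive x =
      lambertW y * (y - x) - deriv lambertW ξ / 2 * (y - x) ^ 2 := by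
  have pos_of_mem {t : ℝ} (ht : t ∈ Icc x y) : 0 < t := hx.trans_le ht.1
  obtain ⟨ξ, hξ, taylor⟩ := exists_taylor_two_eq_of_hasDerivAt hxy
    (fun t ht ↦ hasDerivAt_lambertWPrimitive (pos_of_mem ht))
    (fun t ht ↦ (differentiableAt_lambertW (pos_of_mem ht)).hasDerivAt)
  exact ⟨ξ, hξ, by linear_combination -taylor⟩

end LambertW

section Approximants

theorem E_pos (n : ℕ) : 0 < E n := by
  have W_pos : 0 < lambertW (n + 1) := lambertW_pos n.cast_add_one_pos
  unfold E
  positivity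

theorem Estar_pos (n : ℕ) : 0 < Estar n := by
  have W_nonneg : 0 ≤ lambertW n := lambertW_nonneg n.cast_nonneg
  unfold Estar
  positivity

theorem log_E (n : ℕ) :
    log (E n) = log (Stirling.stirlingSeq (n + 1)) - log √π
      + (lambertWPrimitive (n + 1) - lambertW (n + 1) - 1) - log (1 + lambertW (n + 1)) / 2 := by
  have n_add_one_pos : (0 : ℝ) < n + 1 := n.cast_add_one_pos
  have W_pos : 0 < lambertW (n + 1) := lambertW_pos n_add_one_pos
  have log_prefactor : log (2 * π * (n + 1) * (lambertW (n + 1) + 1)) =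
      log 2 + log π + log (n + 1) + log (1 + lambertW (n + 1)) := by
    rw [log_mul (by positivity) (by positivity), log_mul (by positivity) (by positivity),
      log_mul (by positivity) (by positivity), add_comm (lambertW _)]
  rw [E, log_div (by positivity) (by positivity), log_mul (by positivity) (by positivity),
    log_mul (by positivity) (by positivity), log_exp, log_pow, log_sqrt (by positivity),
    log_sqrt pi_pos.le, log_prefactor, log_stirlingSeq_succ,
    log_lambertW n_add_one_pos, lambertWPrimitive]
  ring

theorem log_Estar (n : ℕ) :
    log (Estar n) = lambertWPrimitive n - 1 - log (1 + lambertW n) / 2 := by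
  have W_nonneg : 0 ≤ lambertW n := lambertW_nonneg n.cast_nonneg
  rw [Estar, log_div (by positivity) (by positivity), log_exp, log_sqrt (by positivity),
    lambertWPrimitive]
  ring

theorem log_E_sub_log_Estar (n : ℕ) :
    log (E n) - log (Estar n) = log (Stirling.stirlingSeq (n + 1)) - log √π
      + (lambertWPrimitive (n + 1) - lambertWPrimitive n - lambertW (n + 1))
      - (log (1 + lambertW (n + 1)) - log (1 + lambertW n)) / 2 := by
  rw [log_E, log_Estar]
  ring

theorem log_E_le_log_Estar {n : ℕ} (hn : n ≠ 0) : log (E n) ≤ log (Estar n) := by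
  have n_pos : (0 : ℝ) < n := by positivity
  obtain ⟨ξ, ⟨n_lt_ξ, ξ_lt⟩, taylor⟩ := exists_lambertWPrimitive_taylor_eq n_pos (lt_add_one _)
  have deriv_ge : 1 / (4 * ((n : ℝ) + 1)) ≤ deriv lambertW ξ :=
    (one_div_four_mul_le_deriv_lambertW (by linarith)).trans
      (antitoneOn_deriv_lambertW (n_pos.trans n_lt_ξ) (mem_Ioi.2 n.cast_add_one_pos) ξ_lt.le)
  have stirling_le : log (Stirling.stirlingSeq (n + 1)) ≤ log √π + 1 / (12 * ((n : ℝ) + 1)) :=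
    mod_cast log_stirlingSeq_le n.succ_ne_zero
  have stirling_gain_le : 1 / (12 * ((n : ℝ) + 1)) ≤ 1 / (4 * ((n : ℝ) + 1)) / 2 := by
    rw [div_div]
    exact one_div_le_one_div_of_le (by positivity) (by linarith)
  have log_le : log (1 + lambertW n) ≤ log (1 + lambertW (n + 1)) := by
    have W_nonneg := lambertW_nonneg n_pos.le
    gcongr
    exact strictMonoOn_lambertW.monotoneOn n_pos.le (n_pos.trans (lt_add_one _)).le (by simp)
  linarith [log_E_sub_log_Estar n]

theorem log_Estar_sub_le_log_E {n : ℕ} (hn : n ≠ 0) :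
    log (Estar n) - 1 / (2 * n) ≤ log (E n) := by
  have n_pos : (0 : ℝ) < n := by positivity
  obtain ⟨ξ, ⟨n_lt_ξ, -⟩, taylor⟩ := exists_lambertWPrimitive_taylor_eq n_pos (lt_add_one _)
  have deriv_le : deriv lambertW ξ ≤ deriv lambertW n :=
    antitoneOn_deriv_lambertW n_pos (n_pos.trans n_lt_ξ) n_lt_ξ.le
  have stirling_ge : log √π ≤ log (Stirling.stirlingSeq (n + 1)) :=
    log_le_log (sqrt_pos.2 pi_pos) (Stirling.sqrt_pi_le_stirlingSeq n.succ_ne_zero)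
  have log_sub_le := log_one_add_lambertW_sub_le n_pos (lt_add_one _).le
  have total_loss_le := deriv_lambertW_mul_one_add_le n_pos
  have half_inv : 1 / (2 * (n : ℝ)) = 1 / n / 2 := by ring
  rw [mul_add, mul_one, mul_one_div] at total_loss_le
  rw [add_sub_cancel_left, mul_one] at log_sub_le
  rw [half_inv]
  linarith [log_E_sub_log_Estar n]

end Approximants

theorem stmt_3 (n : ℕ) (hn : 1 ≤ n) :
    (1 - 1 / (2 * (n : ℝ))) * Estar n ≤ E n ∧ E n ≤ Estar n := by
  have n_ne_zero : n ≠ 0 := Nat.one_le_iff_ne_zero.1 hn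
  constructor
  · calc (1 - 1 / (2 * (n : ℝ))) * Estar n
        ≤ exp (-(1 / (2 * n))) * Estar n :=
          mul_le_mul_of_nonneg_right (one_sub_le_exp_neg _) (Estar_pos n).le
      _ = exp (log (Estar n) - 1 / (2 * n)) := by
          rw [sub_eq_neg_add, exp_add, exp_log (Estar_pos n)]
      _ ≤ E n := (le_log_iff_exp_le (E_pos n)).1 (log_Estar_sub_le_log_E n_ne_zero)
  · exact (log_le_log_iff (E_pos n) (Estar_pos n)).1 (log_E_le_log_Estar n_ne_zero)
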